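/- arXiv:2308.05066 — 2 statements merged into one kernel-verified Lean document; each statement's English description precedes it below -/
import Mathlib

section
/- Let k be a field of characteristic 0 and B a normal affine k-domain graded over k by an abelian group G. Assume that 𝔾(B)/𝔾̄(B) is not a torsion group, let r = rank(𝔾(B)/𝔾̄(B)) (the dimension of the ℚ-vector space ℚ ⊗_ℤ (𝔾(B)/𝔾̄(B))) and W = torc(𝔾̄(B), 𝔾(B)). Then: (a) there exists a set Δ of locally nilpotent derivations of B such that ⋂_{D∈Δ} ker D = B^{(W)}; (b) there exists a field K with ML(B) ⊆ B^{(W)} ⊆ K ⊆ Frac(B) such that Frac(B) is a purely transcendental extension of K of transcendence degree r; in particular, the transcendence degree of Frac(B) over Frac(ML(B)) is at least r; (c) B is non-rigid. -/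
noncomputable section

/-- A derivation is locally nilpotent. -/
def IsLND {R : Type*} [CommRing R] (D : Derivation ℤ R R) : Prop :=
  ∀ b : R, ∃ n : ℕ, 0 < n ∧ (⇑D)^[n] b = 0

/-- Kernel of a derivation, as a subring. -/
def kerDer {R : Type*} [CommRing R] (D : Derivation ℤ R R) : Subring R where
  carrier := {x | D x = 0}
  one_mem' := by simp
  mul_mem' := by
    intro a b ha hb
    simp only [Set.mem_setOf_eq] at *
    rw [Derivation.leibniz, ha, hb]
    simp
  add_mem' := by
    intro a b ha hb
    simp only [Set.mem_setOf_eq] at *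
    rw [map_add, ha, hb, add_zero]
  zero_mem' := by simp
  neg_mem' := by
    intro a ha
    simp only [Set.mem_setOf_eq] at *
    rw [map_neg, ha, neg_zero]

section Graded

variable {G : Type*} [AddCommGroup G] {B : Type*} [CommRing B]

/-- The Veronese subring `B^{(H)} = ⊕_{i ∈ H} B_i` of a `G`-graded ring,
realized as the subring generated by the homogeneous elements whose degree lies in `H`. -/
def verSub (𝒜 : G → AddSubgroup B) (H : AddSubgroup G) : Subring B :=
  Subring.closure (⋃ i ∈ (H : Set G), (𝒜 i : Set B))

/-- 𝔾(B): the subgroup of G generated by the degrees of nonzero homogeneous elements. -/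
def Gsub (𝒜 : G → AddSubgroup B) : AddSubgroup G :=
  AddSubgroup.closure { i : G | 𝒜 i ≠ ⊥ }

/-- `H ∈ 𝕋(B)`: the quotient `𝔾(B)/(H ∩ 𝔾(B))` is torsion. -/
def Tmem (𝒜 : G → AddSubgroup B) (H : AddSubgroup G) : Prop :=
  ∀ g ∈ Gsub 𝒜, ∃ n : ℕ, 0 < n ∧ n • g ∈ H

/-- A homogeneous derivation of `B`. -/
def IsHomogDer (𝒜 : G → AddSubgroup B) (D : Derivation ℤ B B) : Prop :=
  ∃ d : G, ∀ (i : G) (x : B), x ∈ 𝒜 i → D x ∈ 𝒜 (i + d)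

/-- A homogeneous derivation of a graded subring `S` of `B`. -/
def IsHomogDerOn (𝒜 : G → AddSubgroup B) (S : Subring B) (D : Derivation ℤ S S) : Prop :=
  ∃ d : G, ∀ (i : G) (x : S), (x : B) ∈ 𝒜 i → ((D x : S) : B) ∈ 𝒜 (i + d)

/-- 𝕄̄(B,p): the subgroup of G generated by the degrees i with B_i ⊄ p. -/
def Mbar (𝒜 : G → AddSubgroup B) (p : Ideal B) : AddSubgroup G :=
  AddSubgroup.closure { i : G | ¬ (𝒜 i : Set B) ⊆ (p : Set B) }

/-- A prime ideal of height 1. -/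
def heightOne {R : Type*} [CommRing R] (p : Ideal R) : Prop :=
  p.IsPrime ∧ (∃ q : Ideal R, q.IsPrime ∧ q < p) ∧
    ∀ q r : Ideal R, q.IsPrime → r.IsPrime → q < r → r < p → False

open Classical in
/-- 𝔾̄(B). -/
def Gbar (𝒜 : G → AddSubgroup B) : AddSubgroup G :=
  if ∃ p : Ideal B, heightOne p then ⨅ p : {p : Ideal B // heightOne p}, Mbar 𝒜 p.1
  else Gsub 𝒜

end Graded

/-- The torsion-closure of H in K: elements x ∈ K with n • x ∈ H for some n ≥ 1. -/
def torc {G : Type*} [AddCommGroup G] (H K : AddSubgroup G) : AddSubgroup G where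
  carrier := { x | x ∈ K ∧ ∃ n : ℕ, 0 < n ∧ n • x ∈ H }
  zero_mem' := ⟨K.zero_mem, 1, one_pos, by simpa using H.zero_mem⟩
  add_mem' := by
    rintro a b ⟨haK, n, hn, ha⟩ ⟨hbK, m, hm, hb⟩
    refine ⟨K.add_mem haK hbK, n * m, Nat.mul_pos hn hm, ?_⟩
    have h1 : (n * m) • (a + b) = m • (n • a) + n • (m • b) := by
      rw [smul_add, mul_smul, mul_smul, smul_comm n m a]
    rw [h1]
    exact H.add_mem (AddSubgroup.nsmul_mem H ha m) (AddSubgroup.nsmul_mem H hb n)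
  neg_mem' := by
    rintro a ⟨haK, n, hn, ha⟩
    exact ⟨K.neg_mem haK, n, hn, by rw [smul_neg]; exact H.neg_mem ha⟩

/-- The Makar-Limanov invariant ML(B), as a set. -/
def MLset {B : Type*} [CommRing B] : Set B :=
  { x | ∀ D : Derivation ℤ B B, IsLND D → D x = 0 }

open TensorProduct

/-!
For a height-one prime `p`, coarsen the grading by `G → G / torc(𝕄̄(B,p), 𝔾(B))`. The degrees that
occur then form a torsion-free group and every component of nonzero degree lies in `p`. Hence `p` is
homogeneous and, `B_p` being a discrete valuation ring, some homogeneous `π ∈ p` is a uniformizer;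
comparing degrees, every homogeneous `f ≠ 0` has degree `m • deg π`, with `m` its valuation, and
`π ^ m` divides `s * f` for some `s ≠ 0` of degree `0`. So `B` is `ℕ`-graded. If `E` denotes its
Euler derivation, a single `a ≠ 0` of degree `0` makes `D = (a / π) E` map `B` into itself, because
`B` is finitely generated. This `D` lowers degrees by one, so it is locally nilpotent, and its
kernel is the component of degree `0`, that is, `B^{(torc(𝕄̄(B,p), 𝔾(B)))}`.

Only finitely many groups `𝕄̄(B,p)` occur, since each is generated by some of the degrees occurring
in a finite set of generators of `B`. Torsion-closure commutes with finite intersections, so the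
kernels of these derivations intersect in `B^{(W)}`. If `B` were rigid this would be `B`, and
`𝔾(B)/𝔾̄(B)` would be torsion.

Coarsened along `G → G / W`, the degrees form a free group of rank `r`. Homogeneous fractions whose
degrees are a basis of it are algebraically independent over the field `K` of homogeneous fractions
of degree `0`, since distinct monomials have distinct degrees; and every homogeneous fraction is an
element of `K` times a Laurent monomial in them.
-/

open DirectSum

section Coarsening

variable {ι κ B : Type*}

/-- The coarsening of a family of homogeneous components along a homomorphism `q` of degree monoids:
its component of degree `c` is the sum of the components whose degree `q` maps to `c`. -/
def coarsen [AddMonoid ι] [AddMonoid κ] [Ring B] (𝒜 : ι → AddSubgroup B) (q : ι →+ κ) (c : κ) :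
    AddSubgroup B :=
  ⨆ i : {i // q i = c}, 𝒜 i

section Family

variable [AddMonoid ι] [AddMonoid κ] [Ring B] (𝒜 : ι → AddSubgroup B) (q : ι →+ κ)

theorem le_coarsen (i : ι) : 𝒜 i ≤ coarsen 𝒜 q (q i) :=
  le_iSup (fun j : {j // q j = q i} => 𝒜 j) ⟨i, rfl⟩

variable {𝒜 q} in
theorem coarsen_induction {P : B → Prop} {c : κ} {x : B} (hx : x ∈ coarsen 𝒜 q c)
    (mem : ∀ i, q i = c → ∀ x ∈ 𝒜 i, P x) (zero : P 0) (add : ∀ x y, P x → P y → P (x + y)) :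
    P x :=
  AddSubgroup.iSup_induction (C := P) _ hx (fun i => mem i i.2) zero add

theorem coarsen_ne_bot_iff {c : κ} : coarsen 𝒜 q c ≠ ⊥ ↔ ∃ i, q i = c ∧ 𝒜 i ≠ ⊥ := by
  simp [coarsen, iSup_eq_bot]

instance coarsen.gradedMonoid [SetLike.GradedMonoid 𝒜] : SetLike.GradedMonoid (coarsen 𝒜 q) where
  one_mem := map_zero q ▸ le_coarsen 𝒜 q 0 SetLike.GradedOne.one_mem
  mul_mem c e x y hx hy := by
    refine coarsen_induction (P := (· * y ∈ _)) hx (fun i hi x hx => ?_) (by simp)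
      fun x x' hx hx' => ?_
    · refine coarsen_induction (P := (x * · ∈ _)) hy (fun j hj y hy => ?_) (by simp)
        fun y y' hy hy' => ?_
      · rw [← hi, ← hj, ← map_add]
        exact le_coarsen 𝒜 q _ (SetLike.mul_mem_graded hx hy)
      · rw [mul_add]
        exact add_mem hy hy'
    · rw [add_mul]
      exact add_mem hx hx'

end Family

variable [DecidableEq ι] [AddMonoid ι] [AddMonoid κ] [Ring B]
  (𝒜 : ι → AddSubgroup B) [GradedRing 𝒜] (q : ι →+ κ)

instance coarsen.gradedRing [DecidableEq κ] : GradedRing (coarsen 𝒜 q) where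
  toGradedMonoid := coarsen.gradedMonoid 𝒜 q
  toDecomposition :=
    let φ : B →+ ⨁ c, coarsen 𝒜 q c :=
      (toAddMonoid fun i => (of (fun c => coarsen 𝒜 q c) (q i)).comp
        (AddSubgroup.inclusion (le_coarsen 𝒜 q i))).comp (decomposeAddEquiv 𝒜).toAddMonoidHom
    have φ_of {i : ι} {x : B} (hx : x ∈ 𝒜 i) : φ x = of _ (q i) ⟨x, le_coarsen 𝒜 q i hx⟩ := by
      simp [φ, decompose_of_mem 𝒜 hx, AddSubgroup.inclusion]
    Decomposition.ofAddHom _ φ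
      (by
        ext x
        induction x using Decomposition.inductionOn 𝒜 with
        | zero => simp
        | homogeneous x => simp [φ]
        | add x y hx hy => rw [map_add, hx, hy, map_add])
      (by
        ext c ⟨x, hx⟩ : 2
        obtain ⟨_, h⟩ : ∃ h : x ∈ coarsen 𝒜 q c, φ x = of _ c ⟨x, h⟩ := by
          refine coarsen_induction (P := fun x => ∃ h : x ∈ coarsen 𝒜 q c, φ x = of _ c ⟨x, h⟩) hx
            ?_ ⟨zero_mem _, (map_zero _).trans (map_zero _).symm⟩ ?_
          · rintro i rfl x hx
            exact ⟨le_coarsen 𝒜 q i hx, φ_of hx⟩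
          · rintro x y ⟨hx, ex⟩ ⟨hy, ey⟩
            exact ⟨add_mem hx hy, by rw [map_add, ex, ey, ← map_add, AddMemClass.mk_add_mk]⟩
        simpa using h)

theorem mem_coarsen_iff {c : κ} {x : B} :
    x ∈ coarsen 𝒜 q c ↔ ∀ i, (decompose 𝒜 x i : B) ≠ 0 → q i = c := by
  constructor
  · intro hx i
    refine coarsen_induction (P := fun x => (decompose 𝒜 x i : B) ≠ 0 → q i = c) hx
      (fun j hj y hy hyi => ?_) (by simp) fun x y hx hy hxy => ?_
    · rw [← hj]
      by_contra hij
      exact hyi (decompose_of_mem_ne 𝒜 hy fun h => hij (h ▸ rfl))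
    · by_contra hi
      exact hxy (by simp [not_not.1 (mt hx hi), not_not.1 (mt hy hi)])
  · intro h
    classical
    rw [← sum_support_decompose 𝒜 x]
    refine sum_mem fun i hi => ?_
    have hi' : (decompose 𝒜 x i : B) ≠ 0 := by simpa using hi
    exact h i hi' ▸ le_coarsen 𝒜 q i (decompose 𝒜 x i).2

end Coarsening

section Veronese

variable {G Q B : Type*} [AddCommGroup G] [AddCommGroup Q] [CommRing B] (𝒜 : G → AddSubgroup B)

theorem Gsub_coarsen (q : G →+ Q) : Gsub (coarsen 𝒜 q) = (Gsub 𝒜).map q := by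
  rw [Gsub, Gsub, AddMonoidHom.map_closure]
  congr 1
  ext c
  simp [coarsen_ne_bot_iff, and_comm]

theorem mem_verSub_iff_mem_coarsen [SetLike.GradedMonoid 𝒜] (H : AddSubgroup G) {x : B} :
    x ∈ verSub 𝒜 H ↔ x ∈ coarsen 𝒜 (QuotientAddGroup.mk' H) 0 := by
  refine ⟨fun hx => ?_, fun hx => ?_⟩
  · suffices verSub 𝒜 H ≤ SetLike.GradeZero.subring (coarsen 𝒜 (QuotientAddGroup.mk' H)) from
      this hx
    refine Subring.closure_le.2 (Set.iUnion₂_subset fun i hi x hx => ?_)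
    have hi0 : QuotientAddGroup.mk' H i = 0 := (QuotientAddGroup.eq_zero_iff i).2 hi
    have hx' := le_coarsen 𝒜 (QuotientAddGroup.mk' H) i hx
    rwa [hi0] at hx'
  · refine coarsen_induction hx (fun i hi x hx => ?_) (zero_mem _) fun x y => add_mem
    exact Subring.subset_closure (Set.mem_biUnion ((QuotientAddGroup.eq_zero_iff i).1 hi) hx)

theorem mem_verSub_iff [DecidableEq G] [GradedRing 𝒜] (H : AddSubgroup G) {x : B} :
    x ∈ verSub 𝒜 H ↔ ∀ i, (decompose 𝒜 x i : B) ≠ 0 → i ∈ H := by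
  simp [mem_verSub_iff_mem_coarsen, mem_coarsen_iff]

end Veronese

section Regrading

variable {ι κ B : Type*} [DecidableEq ι] [DecidableEq κ] [AddMonoid ι] [AddMonoid κ] [Ring B]

/-- A grading supported on the image of an injective homomorphism `f` of degree monoids, regraded
by the source of `f`. -/
abbrev comapGradedRing (ℬ : ι → AddSubgroup B) [GradedRing ℬ] (f : κ →+ ι)
    (hf : Function.Injective f) (hℬ : ∀ c ∉ Set.range f, ℬ c = ⊥) :
    GradedRing (fun k => ℬ (f k)) where
  one_mem := by simpa using SetLike.GradedOne.one_mem (A := ℬ)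
  mul_mem i j x y hx hy := by simpa using SetLike.mul_mem_graded (A := ℬ) hx hy
  toDecomposition :=
    let φ : (⨁ i, ℬ i) →+ ⨁ k, ℬ (f k) :=
      ⟨⟨DFinsupp.comapDomain f hf, DFinsupp.comapDomain_zero f hf⟩, DFinsupp.comapDomain_add f hf⟩
    have φ_of (k : κ) (x : ℬ (f k)) : φ (of _ (f k) x) = of (fun k => ℬ (f k)) k x :=
      DFinsupp.comapDomain_single (β := fun i => ℬ i) f hf k x
    Decomposition.ofAddHom _ (φ.comp (decomposeAddEquiv ℬ).toAddMonoidHom)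
      (by
        ext x
        induction x using Decomposition.inductionOn ℬ with
        | zero => simp
        | @homogeneous i x =>
          by_cases hi : i ∈ Set.range f
          · obtain ⟨k, rfl⟩ := hi
            simp [φ_of]
          · have hx : (x : B) = 0 := by simpa [hℬ i hi] using x.2
            simp [hx]
        | add x y hx hy => rw [map_add, hx, hy, map_add])
      (by
        ext k x : 2
        simp [φ_of])

end Regrading

section GradedDomain

variable {ι B : Type*} [DecidableEq ι] [Ring B]

theorem mem_of_decompose_eq_zero (𝒜 : ι → AddSubgroup B) [Decomposition 𝒜] {c : ι} {x : B}
    (h : ∀ i, i ≠ c → (decompose 𝒜 x i : B) = 0) : x ∈ 𝒜 c := by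
  classical
  rw [← sum_support_decompose 𝒜 x]
  refine sum_mem fun i hi => ?_
  have hi' : (decompose 𝒜 x i : B) ≠ 0 := by simpa using hi
  exact not_not.1 (mt (h i) hi') ▸ (decompose 𝒜 x i).2

theorem mem_graded_of_mul_mem [AddLeftCancelMonoid ι] [IsDomain B] {𝒜 : ι → AddSubgroup B}
    [GradedRing 𝒜] {i j : ι} {a x : B} (ha : a ∈ 𝒜 i)
    (ha0 : a ≠ 0) (h : a * x ∈ 𝒜 (i + j)) : x ∈ 𝒜 j := by
  have hx : a * decompose 𝒜 x j = a * x := by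
    rw [← coe_decompose_mul_add_of_left_mem 𝒜 ha, decompose_of_mem_same 𝒜 h]
  exact mul_left_cancel₀ ha0 hx ▸ (decompose 𝒜 x j).2

end GradedDomain

section Euler

variable {B : Type*} [CommRing B] (𝒩 : ℕ → AddSubgroup B) [GradedRing 𝒩]

/-- The Euler derivation of an `ℕ`-graded ring, which multiplies elements of degree `m` by `m`. -/
def eulerDerivation : Derivation ℤ B B :=
  let φ : B →+ B := (toAddMonoid fun m => m • (𝒩 m).subtype).comp
    (decomposeAddEquiv 𝒩).toAddMonoidHom
  have φ_of {m : ℕ} {x : B} (hx : x ∈ 𝒩 m) : φ x = m • x := by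
    simp [φ, decompose_of_mem 𝒩 hx]
  Derivation.mk' φ.toIntLinearMap fun x y => by
    change φ (x * y) = x * φ y + y * φ x
    induction x using Decomposition.inductionOn 𝒩 with
    | zero => simp
    | homogeneous x =>
      induction y using Decomposition.inductionOn 𝒩 with
      | zero => simp
      | homogeneous y =>
        rw [φ_of (SetLike.mul_mem_graded x.2 y.2), φ_of x.2, φ_of y.2]
        simp only [nsmul_eq_mul, Nat.cast_add]
        ring
      | add y y' hy hy' =>
        rw [mul_add, map_add, map_add, hy, hy']
        ring
    | add x x' hx hx' =>
      rw [add_mul, map_add, map_add, hx, hx']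
      ring

variable {𝒩} in
theorem eulerDerivation_of_mem {m : ℕ} {x : B} (hx : x ∈ 𝒩 m) : eulerDerivation 𝒩 x = m • x := by
  simp [eulerDerivation, decompose_of_mem 𝒩 hx]

theorem decompose_eulerDerivation (x : B) (m : ℕ) :
    (decompose 𝒩 (eulerDerivation 𝒩 x) m : B) = m • (decompose 𝒩 x m : B) := by
  induction x using Decomposition.inductionOn 𝒩 with
  | zero => simp
  | @homogeneous n x =>
    rw [eulerDerivation_of_mem x.2]
    by_cases h : n = m
    · subst h
      rw [decompose_of_mem_same 𝒩 (nsmul_mem x.2 n), decompose_of_mem_same 𝒩 x.2]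
    · rw [decompose_of_mem_ne 𝒩 (nsmul_mem x.2 n) h, decompose_of_mem_ne 𝒩 x.2 h, smul_zero]
  | add x y hx hy => simp [hx, hy]

variable {𝒩} in
theorem eulerDerivation_eq_zero_iff [IsDomain B] [CharZero B] {x : B} :
    eulerDerivation 𝒩 x = 0 ↔ x ∈ 𝒩 0 := by
  refine ⟨fun h => mem_of_decompose_eq_zero 𝒩 fun m hm => ?_, fun h => ?_⟩
  · simpa [h, hm] using (decompose_eulerDerivation 𝒩 x m).symm
  · simp [eulerDerivation_of_mem h]

variable {𝒩} in
theorem isLND_of_mem_succ {D : Derivation ℤ B B} (h0 : ∀ x ∈ 𝒩 0, D x = 0)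
    (hsucc : ∀ m, ∀ x ∈ 𝒩 (m + 1), D x ∈ 𝒩 m) : IsLND D := by
  intro b
  induction b using Decomposition.inductionOn 𝒩 with
  | zero => exact ⟨1, one_pos, map_zero D⟩
  | @homogeneous m x =>
    refine ⟨m + 1, m.succ_pos, ?_⟩
    obtain ⟨x, hx⟩ := x
    induction m generalizing x with
    | zero => exact h0 x hx
    | succ m ih => exact ih _ (hsucc m x hx)
  | add x y hx hy =>
    obtain ⟨m, hm, hx⟩ := hx
    obtain ⟨n, -, hy⟩ := hy
    refine ⟨m + n, by lia, ?_⟩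
    rw [iterate_map_add, add_comm m n, Function.iterate_add_apply, hx, iterate_map_zero,
      add_comm n m, Function.iterate_add_apply, hy, iterate_map_zero, add_zero]

end Euler

section Division

variable {B : Type*} [CommRing B]

theorem exists_forall_dvd_mul_derivation {R : Type*} [CommRing R] [Algebra R B]
    [Algebra.FiniteType R B] {E : Derivation ℤ B B} (hE : ∀ c : R, E (algebraMap R B c) = 0)
    {π : B} {M : Submonoid B} (hM : ∀ x, ∃ s ∈ M, π ∣ s * E x) : ∃ s ∈ M, ∀ x, π ∣ s * E x := by
  obtain ⟨S, hS⟩ := Algebra.FiniteType.out (R := R) (A := B)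
  choose s hsM hs using hM
  refine ⟨∏ x ∈ S, s x, M.prod_mem fun x _ => hsM x, fun x => ?_⟩
  have hx : x ∈ Algebra.adjoin R (S : Set B) := hS ▸ Algebra.mem_top
  induction hx using Algebra.adjoin_induction with
  | mem x hx => exact (hs x).trans (mul_dvd_mul_right (Finset.dvd_prod_of_mem s hx) _)
  | algebraMap c => simp [hE]
  | add x y _ _ hx hy =>
    rw [map_add, mul_add]
    exact dvd_add hx hy
  | mul x y _ _ hx hy =>
    rw [Derivation.leibniz, smul_eq_mul, smul_eq_mul, mul_add, mul_left_comm, mul_left_comm _ y]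
    exact dvd_add (hy.mul_left x) (hx.mul_left y)

theorem exists_derivation_mul_eq [IsDomain B] {E : Derivation ℤ B B} {π : B} (hπ : π ≠ 0)
    (h : ∀ x, π ∣ E x) : ∃ D : Derivation ℤ B B, ∀ x, π * D x = E x := by
  choose D hD using h
  refine ⟨Derivation.mk' (AddMonoidHom.mk' D fun x y => ?_).toIntLinearMap fun x y => ?_,
    fun x => (hD x).symm⟩
  · apply mul_left_cancel₀ hπ
    rw [mul_add, ← hD, ← hD, ← hD, map_add]
  · apply mul_left_cancel₀ hπ
    change π * D (x * y) = π * (x * D y + y * D x)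
    rw [← hD, mul_add, mul_left_comm, ← hD, mul_left_comm, ← hD, Derivation.leibniz,
      smul_eq_mul, smul_eq_mul]

theorem exists_isLND_of_natGrading [IsDomain B] [CharZero B] {R : Type*} [CommRing R]
    [Algebra R B] [Algebra.FiniteType R B] (𝒩 : ℕ → AddSubgroup B) [GradedRing 𝒩]
    (hR : ∀ c : R, algebraMap R B c ∈ 𝒩 0) {π : B} (hπ : π ∈ 𝒩 1) (hπ0 : π ≠ 0)
    (hdvd : ∀ m, ∀ f ∈ 𝒩 (m + 1), ∃ s ∈ 𝒩 0, s ≠ 0 ∧ π ∣ s * f) :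
    ∃ D : Derivation ℤ B B, IsLND D ∧ ∀ x, D x = 0 ↔ x ∈ 𝒩 0 := by
  let E := eulerDerivation 𝒩
  let M : Submonoid B := (SetLike.GradeZero.subring 𝒩).toSubmonoid ⊓ nonZeroDivisors B
  have hM : ∀ x, ∃ s ∈ M, π ∣ s * E x := by
    intro x
    induction x using Decomposition.inductionOn 𝒩 with
    | zero => exact ⟨1, M.one_mem, by simp⟩
    | @homogeneous m x =>
      cases m with
      | zero => exact ⟨1, M.one_mem, by simp [E, eulerDerivation_of_mem x.2]⟩
      | succ m =>
        obtain ⟨s, hs, hs0, hsx⟩ := hdvd m x x.2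
        refine ⟨s, ⟨hs, mem_nonZeroDivisors_of_ne_zero hs0⟩, ?_⟩
        rw [eulerDerivation_of_mem x.2, mul_smul_comm]
        exact dvd_smul_of_dvd _ hsx
    | add x y hx hy =>
      obtain ⟨s, hs, hsx⟩ := hx
      obtain ⟨t, ht, hty⟩ := hy
      refine ⟨s * t, M.mul_mem hs ht, ?_⟩
      rw [map_add, mul_add, mul_right_comm, mul_assoc s t]
      exact dvd_add (hsx.mul_right t) (hty.mul_left s)
  obtain ⟨a, ⟨ha, ha0⟩, haE⟩ := exists_forall_dvd_mul_derivation
    (fun c => eulerDerivation_eq_zero_iff.2 (hR c)) hM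
  obtain ⟨D, hD⟩ := exists_derivation_mul_eq (E := a • E) hπ0 haE
  have hker (x : B) : D x = 0 ↔ x ∈ 𝒩 0 := by
    rw [← eulerDerivation_eq_zero_iff, ← mul_eq_zero_iff_left hπ0, hD]
    exact mul_eq_zero_iff_left (nonZeroDivisors.ne_zero ha0)
  refine ⟨D, isLND_of_mem_succ (fun x => (hker x).2) fun m x hx => ?_, hker⟩
  refine mem_graded_of_mul_mem hπ hπ0 ?_
  have hEx : E x ∈ 𝒩 (m + 1) := by
    rw [eulerDerivation_of_mem hx]
    exact nsmul_mem hx _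
  rw [hD, add_comm]
  simpa using SetLike.mul_mem_graded (A := 𝒩) ha hEx

end Division

section Torc

variable {G : Type*} [AddCommGroup G] {H P : AddSubgroup G}

theorem torc_inf_self : torc (P ⊓ H) P = torc H P := by
  ext x
  exact and_congr_right fun hx => exists_congr fun n =>
    and_congr_right fun _ => and_iff_right (P.nsmul_mem hx n)

theorem mem_torc_iInf {ι : Sort*} {H : ι → AddSubgroup G} (hH : (Set.range H).Finite) {x : G} :
    x ∈ torc (⨅ i, H i) P ↔ x ∈ P ∧ ∀ i, x ∈ torc (H i) P := by
  refine ⟨fun ⟨hx, n, hn, hnx⟩ => ⟨hx, fun i => ⟨hx, n, hn, iInf_le H i hnx⟩⟩, fun ⟨hx, h⟩ => ?_⟩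
  have hex : ∀ K ∈ hH.toFinset, ∃ n : ℕ, 0 < n ∧ n • x ∈ K := by
    intro K hK
    obtain ⟨i, rfl⟩ := hH.mem_toFinset.1 hK
    exact (h i).2
  choose! n hn hnx using hex
  refine ⟨hx, ∏ K ∈ hH.toFinset, n K, Finset.prod_pos hn, (AddSubgroup.mem_iInf).2 fun i => ?_⟩
  have hi : H i ∈ hH.toFinset := hH.mem_toFinset.2 ⟨i, rfl⟩
  obtain ⟨m, hm⟩ := Finset.dvd_prod_of_mem n hi
  rw [hm, mul_nsmul]
  exact nsmul_mem (hnx _ hi) m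

instance isAddTorsionFree_map_mk'_torc :
    IsAddTorsionFree (P.map (QuotientAddGroup.mk' (torc H P))) := by
  rw [isAddTorsionFree_iff_not_isOfFinAddOrder]
  rintro ⟨_, x, hxP, rfl⟩ hx0 hx
  obtain ⟨n, hn, hnx⟩ := isOfFinAddOrder_iff_nsmul_eq_zero.1 hx
  have hnx' : QuotientAddGroup.mk' (torc H P) (n • x) = 0 := by
    simpa using congrArg Subtype.val hnx
  obtain ⟨-, m, hm, hmx⟩ := (QuotientAddGroup.eq_zero_iff _).1 hnx'
  refine hx0 (Subtype.ext ((QuotientAddGroup.eq_zero_iff x).2 ⟨hxP, m * n, Nat.mul_pos hm hn, ?_⟩))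
  rwa [mul_nsmul']

end Torc

section Uniformizer

open IsLocalRing

theorem exists_mem_irreducible_of_span_eq_maximalIdeal {S : Type*} [CommRing S] [IsDomain S]
    [IsDiscreteValuationRing S] {T : Set S} (hT : Ideal.span T = maximalIdeal S) :
    ∃ π ∈ T, Irreducible π := by
  obtain ⟨ϖ, hϖ⟩ := IsDiscreteValuationRing.exists_irreducible S
  by_contra! h
  have hT' : Ideal.span T ≤ Ideal.span {ϖ ^ 2} := by
    refine Ideal.span_le.2 fun t ht => ?_
    have htm : t ∈ maximalIdeal S := hT ▸ Ideal.subset_span ht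
    obtain ⟨u, rfl⟩ := Ideal.mem_span_singleton.1 (hϖ.maximalIdeal_eq ▸ htm)
    have hu : u ∈ maximalIdeal S := fun hu =>
      h _ ht ((associated_mul_unit_left ϖ u hu).symm.irreducible hϖ)
    obtain ⟨v, rfl⟩ := Ideal.mem_span_singleton.1 (hϖ.maximalIdeal_eq ▸ hu)
    exact Ideal.mem_span_singleton.2 ⟨v, by ring⟩
  rw [hT, hϖ.maximalIdeal_eq, Ideal.span_singleton_le_span_singleton,
    ← mul_one (ϖ : S), mul_pow, sq, mul_assoc, mul_dvd_mul_iff_left hϖ.ne_zero] at hT'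
  exact hϖ.not_isUnit (isUnit_of_dvd_one (dvd_of_mul_right_dvd hT'))

variable {B : Type*} [CommRing B] [IsDomain B] {p : Ideal B}

theorem heightOne.eq_bot_of_lt (hp : heightOne p) {q : Ideal B} [hq : q.IsPrime] (h : q < p) :
    q = ⊥ :=
  by_contra fun h0 => hp.2.2 ⊥ q Ideal.isPrime_bot hq (bot_lt_iff_ne_bot.2 h0) h

variable [IsIntegrallyClosed B] [IsNoetherianRing B]

theorem heightOne.isDiscreteValuationRing (hp : heightOne p) [p.IsPrime] (S : Type*) [CommRing S]
    [IsDomain S] [Algebra B S] [IsLocalization.AtPrime S p] : IsDiscreteValuationRing S := by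
  have : IsLocalRing S := IsLocalization.AtPrime.isLocalRing S p
  have : IsNoetherianRing S := IsLocalization.isNoetherianRing p.primeCompl S inferInstance
  have : IsIntegrallyClosed S :=
    isIntegrallyClosed_of_isLocalization S p.primeCompl p.primeCompl_le_nonZeroDivisors
  have hmap : p.map (algebraMap B S) = maximalIdeal S :=
    IsLocalization.AtPrime.map_eq_maximalIdeal p S
  have hprime (P : Ideal S) (hP0 : P ≠ ⊥) (hP : P.IsPrime) : P = maximalIdeal S := by
    have hmapP : (P.comap (algebraMap B S)).map (algebraMap B S) = P :=
      IsLocalization.map_under p.primeCompl S P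
    have hle : P.comap (algebraMap B S) ≤ p :=
      (Ideal.comap_mono (le_maximalIdeal hP.ne_top)).trans
        (IsLocalization.AtPrime.under_maximalIdeal S p).le
    rcases hle.eq_or_lt with h | h
    · rw [← hmapP, ← hmap, h]
    · rw [hp.eq_bot_of_lt h, Ideal.map_bot] at hmapP
      exact absurd hmapP.symm hP0
  have : IsPrincipalIdealRing S :=
    have htfae : IsIntegrallyClosed S ∧ _ → IsPrincipalIdealRing S :=
      ((tfae_of_isNoetherianRing_of_isLocalRing_of_isDomain S).out 3 0).1
    htfae ⟨inferInstance, hprime⟩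
  refine { not_a_field' := fun h => ?_ }
  rw [← hmap, Ideal.map_eq_bot_iff_of_injective
    (IsLocalization.injective S p.primeCompl_le_nonZeroDivisors)] at h
  obtain ⟨q, -, hq⟩ := hp.2.1
  exact not_lt_bot (h ▸ hq)

theorem heightOne.exists_uniformizer (hp : heightOne p) {T : Set B} (hT : Ideal.span T = p) :
    ∃ π ∈ T, π ≠ 0 ∧ ∀ f ≠ 0, ∃ m : ℕ, ∃ s ∉ p, ∃ s' ∉ p, s * f = s' * π ^ m := by
  have : p.IsPrime := hp.1
  let S := Localization.AtPrime p
  let φ : B →+* S := algebraMap B S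
  have hφ : Function.Injective φ := IsLocalization.injective S p.primeCompl_le_nonZeroDivisors
  have : IsDomain S := IsLocalization.isDomain_localization p.primeCompl_le_nonZeroDivisors
  have : IsDiscreteValuationRing S := hp.isDiscreteValuationRing S
  have hspan : Ideal.span (φ '' T) = maximalIdeal S := by
    rw [← Ideal.map_span, hT]
    exact IsLocalization.AtPrime.map_eq_maximalIdeal p S
  obtain ⟨_, ⟨π, hπT, rfl⟩, hπ⟩ := exists_mem_irreducible_of_span_eq_maximalIdeal hspan
  refine ⟨π, hπT, fun h => hπ.ne_zero (by rw [h, map_zero]), fun f hf => ?_⟩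
  obtain ⟨m, u, hu⟩ :=
    IsDiscreteValuationRing.eq_unit_mul_pow_irreducible ((map_ne_zero_iff φ hφ).2 hf) hπ
  obtain ⟨⟨s', s⟩, hs : (u : S) * φ s = φ s'⟩ := IsLocalization.surj p.primeCompl (u : S)
  have hs' : IsUnit (φ s') := hs ▸ u.isUnit.mul (IsLocalization.map_units S s)
  refine ⟨m, s, s.2, s', (IsLocalization.AtPrime.isUnit_to_map_iff S p s').1 hs', hφ ?_⟩
  rw [map_mul, map_mul, map_pow, hu, ← hs]
  ring

end Uniformizer

section HomogeneousUniformizer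

variable {Q B : Type*} [DecidableEq Q] [CommRing B]

theorem sub_decompose_zero_mem [AddMonoid Q] (ℬ : Q → AddSubgroup B) [GradedRing ℬ] {I : Ideal B}
    (hI : ∀ c ≠ 0, ∀ x ∈ ℬ c, x ∈ I) (x : B) : x - decompose ℬ x 0 ∈ I := by
  induction x using Decomposition.inductionOn ℬ with
  | zero => simp
  | @homogeneous c x =>
    by_cases hc : c = 0
    · subst hc
      simp
    · rw [decompose_of_mem_ne ℬ x.2 hc, sub_zero]
      exact hI c hc x x.2
  | add x y hx hy =>
    rw [decompose_add, DirectSum.add_apply, AddMemClass.coe_add, add_sub_add_comm]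
    exact add_mem hx hy

theorem isHomogeneous_of_forall_ne_zero_mem [AddMonoid Q] (ℬ : Q → AddSubgroup B) [GradedRing ℬ]
    {I : Ideal B} (hI : ∀ c ≠ 0, ∀ x ∈ ℬ c, x ∈ I) : I.IsHomogeneous ℬ := by
  intro c x hx
  by_cases hc : c = 0
  · subst hc
    exact (Submodule.sub_mem_iff_right I hx).1 (sub_decompose_zero_mem ℬ hI x)
  · exact hI c hc _ (decompose ℬ x c).2

variable [AddCommGroup Q] [IsDomain B] [IsIntegrallyClosed B] [IsNoetherianRing B] {p : Ideal B}
  (ℬ : Q → AddSubgroup B) [GradedRing ℬ]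

theorem heightOne.exists_homogeneous_uniformizer (hp : heightOne p)
    (hℬ : ∀ c ≠ 0, ∀ x ∈ ℬ c, x ∈ p) :
    ∃ d, ∃ π ∈ ℬ d, π ≠ 0 ∧ ∀ c, ∀ f ∈ ℬ c, f ≠ 0 →
      ∃ m : ℕ, c = m • d ∧ ∃ s ∈ ℬ 0, s ≠ 0 ∧ π ^ m ∣ s * f := by
  have : p.IsPrime := hp.1
  obtain ⟨T, hT⟩ :=
    (Ideal.IsHomogeneous.iff_exists ℬ p).1 (isHomogeneous_of_forall_ne_zero_mem ℬ hℬ)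
  obtain ⟨_, ⟨⟨π, d, hπd⟩, -, rfl⟩, hπ0, hπ⟩ := hp.exists_uniformizer hT.symm
  refine ⟨d, π, hπd, hπ0, fun c f hf hf0 => ?_⟩
  obtain ⟨m, s, hs, s', hs', hss⟩ := hπ f hf0
  have hs0 : (decompose ℬ s 0 : B) ∉ p := fun h =>
    hs ((Submodule.sub_mem_iff_left p h).1 (sub_decompose_zero_mem ℬ hℬ s))
  have hcomp : decompose ℬ s 0 * f = decompose ℬ s' (c - m • d) * π ^ m := by
    rw [← coe_decompose_mul_add_of_right_mem ℬ hf,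
      ← coe_decompose_mul_add_of_right_mem ℬ (SetLike.pow_mem_graded m hπd), hss, zero_add,
      sub_add_cancel]
  refine ⟨m, ?_, decompose ℬ s 0, (decompose ℬ s 0).2, fun h => hs0 (h ▸ p.zero_mem),
    hcomp ▸ dvd_mul_left _ _⟩
  by_contra hc
  -- Then `s₀ * s' ∈ p` for the degree-`0` component `s₀` of `s`, but neither factor lies in `p`.
  have hmem : (decompose ℬ s' (c - m • d) : B) ∈ p :=
    hℬ _ (sub_ne_zero.2 hc) _ (decompose ℬ s' (c - m • d)).2
  have hmul : decompose ℬ s 0 * s' = s * decompose ℬ s' (c - m • d) := by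
    apply mul_right_cancel₀ (pow_ne_zero m hπ0)
    rw [mul_assoc, ← hss, mul_left_comm, hcomp, mul_assoc]
  exact (Ideal.IsPrime.mem_or_mem ‹_› (hmul ▸ p.mul_mem_left s hmem)).elim hs0 hs'

variable {R : Type*} [CommRing R] [Algebra R B] [Algebra.FiniteType R B] [CharZero B]

theorem heightOne.exists_isLND_ker_eq_gradeZero (hR : ∀ c : R, algebraMap R B c ∈ ℬ 0)
    [IsAddTorsionFree (Gsub ℬ)] (hp : heightOne p) (hℬ : ∀ c ≠ 0, ∀ x ∈ ℬ c, x ∈ p) :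
    ∃ D : Derivation ℤ B B, IsLND D ∧ ∀ x, D x = 0 ↔ x ∈ ℬ 0 := by
  obtain ⟨d, π, hπd, hπ0, hπ⟩ := hp.exists_homogeneous_uniformizer ℬ hℬ
  have hbot {c : Q} (hc : ∀ m : ℕ, c ≠ m • d) : ℬ c = ⊥ := by
    refine (AddSubgroup.eq_bot_iff_forall _).2 fun f hf => by_contra fun hf0 => ?_
    obtain ⟨m, hm, -⟩ := hπ c f hf hf0
    exact hc m hm
  by_cases hd : d = 0
  · refine ⟨0, fun x => ⟨1, one_pos, rfl⟩, fun x => iff_of_true rfl ?_⟩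
    refine mem_of_decompose_eq_zero ℬ fun c hc => ?_
    simpa [hbot (c := c) (by simpa [hd] using hc)] using (decompose ℬ x c).2
  have hinj : Function.Injective (multiplesHom Q d) := by
    let d' : Gsub ℬ := ⟨d, AddSubgroup.subset_closure fun h => hπ0 (by simpa [h] using hπd)⟩
    have hd' : d' ≠ 0 := fun h => hd (congrArg Subtype.val h)
    exact fun m n h => injective_nsmul_iff_not_isOfFinAddOrder.2
      (not_isOfFinAddOrder_of_isAddTorsionFree hd') (Subtype.ext h)
  let 𝒩 (m : ℕ) : AddSubgroup B := ℬ (multiplesHom Q d m)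
  have : GradedRing 𝒩 := comapGradedRing ℬ (multiplesHom Q d) hinj fun c hc =>
    hbot fun m hm => hc ⟨m, hm.symm⟩
  have h0 : 𝒩 0 = ℬ 0 := by simp [𝒩]
  rw [← h0] at hR hπ ⊢
  refine exists_isLND_of_natGrading 𝒩 hR (by simpa [𝒩] using hπd) hπ0 fun m f hf => ?_
  rcases eq_or_ne f 0 with rfl | hf0
  · exact ⟨1, SetLike.GradedOne.one_mem, one_ne_zero, by simp⟩
  · obtain ⟨n, hn, s, hs, hs0, hsf⟩ := hπ _ f hf hf0
    obtain rfl : m + 1 = n := hinj hn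
    exact ⟨s, hs, hs0, (dvd_pow_self π m.succ_ne_zero).trans hsf⟩

end HomogeneousUniformizer

section Degrees

variable {G B : Type*} [AddCommGroup G] [CommRing B] (𝒜 : G → AddSubgroup B)

theorem Mbar_bot : Mbar 𝒜 ⊥ = Gsub 𝒜 := by
  have h (i : G) : ¬ (𝒜 i : Set B) ⊆ ((⊥ : Ideal B) : Set B) ↔ 𝒜 i ≠ ⊥ :=
    not_congr (AddSubgroup.eq_bot_iff_forall _).symm
  simp only [Mbar, Gsub, h]

theorem Mbar_anti : Antitone (Mbar 𝒜) := fun _ _ h =>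
  AddSubgroup.closure_mono fun _ hi hi' => hi (hi'.trans h)

theorem Mbar_le_Gsub (p : Ideal B) : Mbar 𝒜 p ≤ Gsub 𝒜 :=
  Mbar_bot 𝒜 ▸ Mbar_anti 𝒜 bot_le

theorem Gbar_eq_Gsub_inf_iInf :
    Gbar 𝒜 = Gsub 𝒜 ⊓ ⨅ p : {p : Ideal B // heightOne p}, Mbar 𝒜 p := by
  rw [Gbar]
  split_ifs with h
  · obtain ⟨p, hp⟩ := h
    exact (inf_eq_right.2 (iInf_le_of_le ⟨p, hp⟩ (Mbar_le_Gsub 𝒜 p))).symm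
  · have : IsEmpty {p : Ideal B // heightOne p} := ⟨fun p => h ⟨p, p.2⟩⟩
    rw [iInf_of_empty, inf_top_eq]

variable [DecidableEq G] [GradedRing 𝒜] {R : Type*} [CommRing R] [Algebra R B]

variable {𝒜} in
theorem decompose_mem_of_mem_adjoin (hR : ∀ c : R, algebraMap R B c ∈ 𝒜 0) {p : Ideal B}
    {H : AddSubgroup G} {S : Set B} (hS : ∀ x ∈ S, ∀ i ∉ H, (decompose 𝒜 x i : B) ∈ p)
    {x : B} (hx : x ∈ Algebra.adjoin R S) {i : G} (hi : i ∉ H) : (decompose 𝒜 x i : B) ∈ p := by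
  induction hx using Algebra.adjoin_induction generalizing i with
  | mem x hx => exact hS x hx i hi
  | algebraMap c =>
    have hi0 : 0 ≠ i := fun h => hi (by rw [← h]; exact H.zero_mem)
    rw [decompose_of_mem_ne 𝒜 (hR c) hi0]
    exact p.zero_mem
  | add x y _ _ hx hy =>
    rw [decompose_add]
    exact p.add_mem (hx hi) (hy hi)
  | mul x y _ _ hx hy =>
    classical
    rw [decompose_mul, coe_mul_apply]
    refine p.sum_mem fun jl hjl => ?_
    obtain ⟨-, hjl⟩ := Finset.mem_filter.1 hjl
    by_cases hj : jl.1 ∈ H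
    · exact p.mul_mem_left _ (hy fun hl => hi (hjl ▸ H.add_mem hj hl))
    · exact p.mul_mem_right _ (hx hj)

variable [Algebra.FiniteType R B]

theorem exists_finset_Mbar_eq_closure (hR : ∀ c : R, algebraMap R B c ∈ 𝒜 0) :
    ∃ T : Finset G, ∀ p : Ideal B, ∃ T' ⊆ (T : Set G), Mbar 𝒜 p = AddSubgroup.closure T' := by
  classical
  obtain ⟨S, hS⟩ := Algebra.FiniteType.out (R := R) (A := B)
  let T : Finset G := S.biUnion fun x => (decompose 𝒜 x).support
  refine ⟨T, fun p => ⟨{i | ¬ (𝒜 i : Set B) ⊆ p} ∩ T, Set.inter_subset_right, le_antisymm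
    ((AddSubgroup.closure_le _).2 fun i hi => ?_)
    (AddSubgroup.closure_mono Set.inter_subset_left)⟩⟩
  by_contra hiT
  refine hi fun x hx => ?_
  have hxS : x ∈ Algebra.adjoin R (S : Set B) := hS ▸ Algebra.mem_top
  rw [← decompose_of_mem_same 𝒜 hx]
  refine decompose_mem_of_mem_adjoin hR (fun y hy j hj => by_contra fun hyj => hj ?_) hxS hiT
  have hyj0 : decompose 𝒜 y j ≠ 0 := fun h => hyj (by simp [h])
  exact AddSubgroup.subset_closure ⟨fun h => hyj (h (decompose 𝒜 y j).2),
    Finset.mem_biUnion.2 ⟨y, hy, DFinsupp.mem_support_iff.2 hyj0⟩⟩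

theorem finite_range_Mbar (hR : ∀ c : R, algebraMap R B c ∈ 𝒜 0) :
    (Set.range (Mbar 𝒜)).Finite := by
  obtain ⟨T, hT⟩ := exists_finset_Mbar_eq_closure 𝒜 hR
  refine (T.finite_toSet.powerset.image AddSubgroup.closure).subset (Set.range_subset_iff.2 ?_)
  intro p
  obtain ⟨T', hT', h⟩ := hT p
  exact ⟨T', hT', h.symm⟩

theorem Gsub_fg (hR : ∀ c : R, algebraMap R B c ∈ 𝒜 0) : (Gsub 𝒜).FG := by
  obtain ⟨T, hT⟩ := exists_finset_Mbar_eq_closure 𝒜 hR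
  obtain ⟨T', hT', h⟩ := hT ⊥
  exact (AddSubgroup.fg_iff _).2 ⟨T', h ▸ Mbar_bot 𝒜, T.finite_toSet.subset hT'⟩

theorem mem_torc_Gbar_iff (hR : ∀ c : R, algebraMap R B c ∈ 𝒜 0) {g : G} :
    g ∈ torc (Gbar 𝒜) (Gsub 𝒜) ↔
      g ∈ Gsub 𝒜 ∧ ∀ p, heightOne p → g ∈ torc (Mbar 𝒜 p) (Gsub 𝒜) := by
  have hfin : (Set.range fun p : {p : Ideal B // heightOne p} => Mbar 𝒜 p).Finite :=
    (finite_range_Mbar 𝒜 hR).subset (Set.range_comp_subset_range Subtype.val (Mbar 𝒜))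
  rw [Gbar_eq_Gsub_inf_iInf, torc_inf_self, mem_torc_iInf hfin, Subtype.forall]

end Degrees

section KernelsOfLND

variable {G B : Type*} [AddCommGroup G] [DecidableEq G] [CommRing B] [IsDomain B]
  [IsIntegrallyClosed B] [IsNoetherianRing B] [CharZero B] {R : Type*} [CommRing R] [Algebra R B]
  [Algebra.FiniteType R B] (𝒜 : G → AddSubgroup B) [GradedRing 𝒜]

theorem heightOne.exists_isLND_ker_eq_verSub (hR : ∀ c : R, algebraMap R B c ∈ 𝒜 0) {p : Ideal B}
    (hp : heightOne p) :
    ∃ D : Derivation ℤ B B, IsLND D ∧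
      ∀ x, D x = 0 ↔ x ∈ verSub 𝒜 (torc (Mbar 𝒜 p) (Gsub 𝒜)) := by
  classical
  let q := QuotientAddGroup.mk' (torc (Mbar 𝒜 p) (Gsub 𝒜))
  have : IsAddTorsionFree (Gsub (coarsen 𝒜 q)) := by
    rw [Gsub_coarsen]
    infer_instance
  have hp' : ∀ c ≠ 0, ∀ x ∈ coarsen 𝒜 q c, x ∈ p := by
    intro c hc x hx
    refine coarsen_induction hx (fun i hi x hx => ?_) p.zero_mem fun x y => p.add_mem
    by_contra hxp
    have hiM : i ∈ Mbar 𝒜 p := AddSubgroup.subset_closure fun h => hxp (h hx)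
    have hiG : i ∈ Gsub 𝒜 := AddSubgroup.subset_closure fun h => hxp (by simp_all)
    exact hc (hi ▸ (QuotientAddGroup.eq_zero_iff i).2 ⟨hiG, 1, one_pos, by simpa using hiM⟩)
  simp only [mem_verSub_iff_mem_coarsen]
  exact hp.exists_isLND_ker_eq_gradeZero (coarsen 𝒜 q)
    (fun c => map_zero q ▸ le_coarsen 𝒜 q 0 (hR c)) hp'

theorem exists_isLND_iInter_ker_eq_verSub (hR : ∀ c : R, algebraMap R B c ∈ 𝒜 0) :
    ∃ Δ : Set (Derivation ℤ B B), (∀ D ∈ Δ, IsLND D) ∧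
      {x : B | ∀ D ∈ Δ, D x = 0} = (verSub 𝒜 (torc (Gbar 𝒜) (Gsub 𝒜)) : Set B) := by
  choose D hD hker using fun p : {p : Ideal B // heightOne p} =>
    p.2.exists_isLND_ker_eq_verSub 𝒜 hR
  refine ⟨Set.range D, Set.forall_mem_range.2 hD, Set.ext fun x => ?_⟩
  simp only [Set.forall_mem_range, Set.mem_ofPred_eq, hker, Subtype.forall, SetLike.mem_coe,
    mem_verSub_iff, mem_torc_Gbar_iff 𝒜 hR]
  refine ⟨fun h i hi => ⟨?_, fun p hp => h p hp i hi⟩, fun h p hp i hi => (h i hi).2 p hp⟩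
  exact AddSubgroup.subset_closure fun h => hi (by simpa [h] using (decompose 𝒜 x i).2)

end KernelsOfLND

section MakarLimanov

variable {G B : Type*} [AddCommGroup G] [DecidableEq G] [CommRing B] (𝒜 : G → AddSubgroup B)
  [GradedRing 𝒜]

variable {𝒜} in
theorem Gsub_le_of_verSub_eq_top {H : AddSubgroup G} (h : verSub 𝒜 H = ⊤) : Gsub 𝒜 ≤ H := by
  refine (AddSubgroup.closure_le _).2 fun i hi => ?_
  obtain ⟨x, hx0⟩ := AddSubgroup.ne_bot_iff_exists_ne_zero.1 hi
  refine (mem_verSub_iff 𝒜 H).1 (h ▸ Subring.mem_top (x : B)) i ?_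
  simpa using hx0

variable [IsDomain B] [IsIntegrallyClosed B] [IsNoetherianRing B] [CharZero B]
  {R : Type*} [CommRing R] [Algebra R B] [Algebra.FiniteType R B]

theorem MLset_subset_verSub (hR : ∀ c : R, algebraMap R B c ∈ 𝒜 0) :
    MLset (B := B) ⊆ (verSub 𝒜 (torc (Gbar 𝒜) (Gsub 𝒜)) : Set B) := by
  obtain ⟨Δ, hΔ, hker⟩ := exists_isLND_iInter_ker_eq_verSub 𝒜 hR
  exact hker ▸ fun x hx D hD => hx D (hΔ D hD)

theorem exists_isLND_ne_zero (hR : ∀ c : R, algebraMap R B c ∈ 𝒜 0)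
    (hG : ∃ g ∈ Gsub 𝒜, ∀ n : ℕ, 0 < n → ¬ n • g ∈ Gbar 𝒜) :
    ∃ D : Derivation ℤ B B, IsLND D ∧ D ≠ 0 := by
  obtain ⟨g, hg, hgn⟩ := hG
  by_contra! hrigid
  have htop : verSub 𝒜 (torc (Gbar 𝒜) (Gsub 𝒜)) = ⊤ :=
    eq_top_iff.2 fun x _ => MLset_subset_verSub 𝒜 hR fun D hD => by simp [hrigid D hD]
  obtain ⟨-, n, hn, hng⟩ := Gsub_le_of_verSub_eq_top htop hg
  exact hgn n hn hng

end MakarLimanov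

section HomogeneousFractions

variable {Q B : Type*} [AddCommGroup Q] [CommRing B]

section

variable (ℬ : Q → AddSubgroup B) [SetLike.GradedMonoid ℬ] (F : Type*) [Field F] [Algebra B F]

/-- The homogeneous fractions of degree `c` in a field `F` over a graded ring: the quotients of two
homogeneous elements whose degrees differ by `c`. The denominator is required not to vanish in `F`,
so that the definition makes sense whether or not the ring embeds into `F`. -/
def homogFrac (c : Q) : AddSubgroup F where
  carrier := {z | ∃ a, ∃ x ∈ ℬ (a + c), ∃ y ∈ ℬ a, algebraMap B F y ≠ 0 ∧
    z = algebraMap B F x / algebraMap B F y}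
  zero_mem' := ⟨0, 0, zero_mem _, 1, SetLike.GradedOne.one_mem, by simp, by simp⟩
  add_mem' := by
    rintro _ _ ⟨a, x, hx, y, hy, hy0, rfl⟩ ⟨a', x', hx', y', hy', hy0', rfl⟩
    refine ⟨a + a', x * y' + y * x', add_mem ?_ ?_, y * y', SetLike.mul_mem_graded hy hy', ?_, ?_⟩
    · exact add_right_comm a c a' ▸ SetLike.mul_mem_graded hx hy'
    · exact add_assoc a a' c ▸ SetLike.mul_mem_graded hy hx'
    · simp [hy0, hy0']
    · simp only [map_add, map_mul, div_add_div _ _ hy0 hy0']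
  neg_mem' := by
    rintro _ ⟨a, x, hx, y, hy, hy0, rfl⟩
    exact ⟨a, -x, neg_mem hx, y, hy, hy0, by rw [map_neg, neg_div]⟩

theorem algebraMap_mem_homogFrac {c : Q} {x : B} (hx : x ∈ ℬ c) :
    algebraMap B F x ∈ homogFrac ℬ F c :=
  ⟨0, x, by rwa [zero_add], 1, SetLike.GradedOne.one_mem, by simp, by simp⟩

instance homogFrac.gradedMonoid : SetLike.GradedMonoid (homogFrac ℬ F) where
  one_mem := map_one (algebraMap B F) ▸ algebraMap_mem_homogFrac ℬ F SetLike.GradedOne.one_mem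
  mul_mem := by
    rintro c c' _ _ ⟨a, x, hx, y, hy, hy0, rfl⟩ ⟨a', x', hx', y', hy', hy0', rfl⟩
    refine ⟨a + a', x * x', ?_, y * y', SetLike.mul_mem_graded hy hy', by simp [hy0, hy0'], ?_⟩
    · exact add_add_add_comm a c a' c' ▸ SetLike.mul_mem_graded hx hx'
    · simp only [map_mul, div_mul_div_comm]

variable {ℬ F}

theorem inv_mem_homogFrac {c : Q} {z : F} (hz : z ∈ homogFrac ℬ F c) :
    z⁻¹ ∈ homogFrac ℬ F (-c) := by
  obtain ⟨a, x, hx, y, hy, -, rfl⟩ := hz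
  by_cases hx0 : algebraMap B F x = 0
  · simp [hx0]
  · exact ⟨a + c, y, by rwa [add_neg_cancel_right], x, hx, hx0, inv_div _ _⟩

theorem exists_homogFrac_common_denominator {ι : Type*} {s : Finset ι} {c : ι → Q} {z : ι → F}
    (hz : ∀ i ∈ s, z i ∈ homogFrac ℬ F (c i)) :
    ∃ a, ∃ y ∈ ℬ a, algebraMap B F y ≠ 0 ∧
      ∀ i ∈ s, ∃ x ∈ ℬ (a + c i), algebraMap B F x = z i * algebraMap B F y := by
  classical
  choose! a x hx y hy hy0 hxy using hz
  refine ⟨∑ i ∈ s, a i, ∏ i ∈ s, y i, SetLike.prod_mem_graded _ _ _ hy, ?_, fun i hi => ?_⟩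
  · rw [map_prod]
    exact Finset.prod_ne_zero_iff.2 hy0
  · refine ⟨x i * ∏ j ∈ s.erase i, y j, ?_, ?_⟩
    · rw [← Finset.add_sum_erase s a hi, add_right_comm]
      exact SetLike.mul_mem_graded (hx i hi)
        (SetLike.prod_mem_graded _ _ _ fun j hj => hy j (Finset.mem_of_mem_erase hj))
    · rw [← Finset.mul_prod_erase s y hi, map_mul, map_mul, ← mul_assoc, hxy i hi,
        div_mul_cancel₀ _ (hy0 i hi)]

theorem exists_ne_zero_mem_homogFrac_of_mem_closure {L : Subfield F} {S : Set Q}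
    (hS : ∀ c ∈ S, ∃ z ∈ L, z ≠ 0 ∧ z ∈ homogFrac ℬ F c) {c : Q}
    (hc : c ∈ AddSubgroup.closure S) : ∃ z ∈ L, z ≠ 0 ∧ z ∈ homogFrac ℬ F c := by
  induction hc using AddSubgroup.closure_induction with
  | mem c hc => exact hS c hc
  | zero => exact ⟨1, one_mem L, one_ne_zero, SetLike.GradedOne.one_mem⟩
  | add c e _ _ hz hw =>
    obtain ⟨z, hzL, hz0, hz⟩ := hz
    obtain ⟨w, hwL, hw0, hw⟩ := hw
    exact ⟨z * w, mul_mem hzL hwL, mul_ne_zero hz0 hw0, SetLike.mul_mem_graded hz hw⟩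
  | neg c _ hz =>
    obtain ⟨z, hzL, hz0, hz⟩ := hz
    exact ⟨z⁻¹, inv_mem hzL, inv_ne_zero hz0, inv_mem_homogFrac hz⟩

theorem exists_ne_zero_mem_homogFrac [FaithfulSMul B F] {c : Q} (hc : c ∈ Gsub ℬ) :
    ∃ z : F, z ≠ 0 ∧ z ∈ homogFrac ℬ F c := by
  have hgen : ∀ i ∈ {i | ℬ i ≠ ⊥}, ∃ z ∈ (⊤ : Subfield F), z ≠ 0 ∧ z ∈ homogFrac ℬ F i := by
    intro i hi
    obtain ⟨x, hx⟩ := AddSubgroup.ne_bot_iff_exists_ne_zero.1 hi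
    exact ⟨algebraMap B F x, trivial, by simpa using hx, algebraMap_mem_homogFrac ℬ F x.2⟩
  obtain ⟨z, -, hz⟩ := exists_ne_zero_mem_homogFrac_of_mem_closure hgen hc
  exact ⟨z, hz⟩

variable (ℬ F) in
/-- The subfield of homogeneous fractions of degree `0`. -/
def homogFracZero : Subfield F where
  __ := SetLike.GradeZero.subring (homogFrac ℬ F)
  inv_mem' z hz := by
    have hz' : z⁻¹ ∈ homogFrac ℬ F (-0) := inv_mem_homogFrac hz
    rwa [neg_zero] at hz'

end

variable [DecidableEq Q] {ℬ : Q → AddSubgroup B} [GradedRing ℬ] {F : Type*} [Field F] [Algebra B F]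

theorem homogFrac_eq_zero_of_sum_eq_zero [FaithfulSMul B F] {ι : Type*} {s : Finset ι} {c : ι → Q}
    {z : ι → F} (hc : Set.InjOn c s) (hz : ∀ i ∈ s, z i ∈ homogFrac ℬ F (c i))
    (hsum : ∑ i ∈ s, z i = 0) : ∀ i ∈ s, z i = 0 := by
  obtain ⟨a, y, -, hy0, hx⟩ := exists_homogFrac_common_denominator hz
  choose! x hx hxz using hx
  have hsum_x : ∑ i ∈ s, x i = 0 := by
    apply FaithfulSMul.algebraMap_injective B F
    rw [map_sum, map_zero, Finset.sum_congr rfl hxz, ← Finset.sum_mul, hsum, zero_mul]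
  intro i hi
  have hproj : GradedRing.proj ℬ (a + c i) (∑ j ∈ s, x j) = x i := by
    rw [map_sum, Finset.sum_eq_single_of_mem i hi fun j hj hji => ?_]
    · exact decompose_of_mem_same ℬ (hx i hi)
    · exact decompose_of_mem_ne ℬ (hx j hj) fun h => hji (hc hj hi (add_left_cancel h))
  have hxi : x i = 0 := by rw [← hproj, hsum_x, map_zero]
  simpa [hxi, hy0] using (hxz i hi).symm

theorem algebraicIndependent_homogFracZero [FaithfulSMul B F] {ι : Type*} {d : ι → Q}
    (hd : LinearIndependent ℕ d) {t : ι → F} (ht0 : ∀ i, t i ≠ 0)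
    (ht : ∀ i, t i ∈ homogFrac ℬ F (d i)) : AlgebraicIndependent (homogFracZero ℬ F) t := by
  refine algebraicIndependent_iff.2 fun p hp => ?_
  rw [MvPolynomial.aeval_def, MvPolynomial.eval₂_eq] at hp
  have hterm (m : ι →₀ ℕ) :
      algebraMap (homogFracZero ℬ F) F (p.coeff m) * ∏ i ∈ m.support, t i ^ m i ∈
        homogFrac ℬ F (Finsupp.linearCombination ℕ d m) := by
    rw [← zero_add (Finsupp.linearCombination ℕ d m)]
    exact SetLike.mul_mem_graded (p.coeff m).2 (SetLike.prod_pow_mem_graded _ _ _ _ fun i _ => ht i)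
  have hzero := homogFrac_eq_zero_of_sum_eq_zero hd.injOn (fun m _ => hterm m) hp
  refine MvPolynomial.support_eq_empty.1 (Finset.eq_empty_of_forall_notMem fun m hm => ?_)
  refine mul_ne_zero ?_ (Finset.prod_ne_zero_iff.2 fun i _ => pow_ne_zero _ (ht0 i)) (hzero m hm)
  simpa using hm

theorem closure_homogFracZero_union_range_eq_top [IsFractionRing B F] {ι : Type*}
    {d : ι → Q} (hd : Gsub ℬ ≤ AddSubgroup.closure (Set.range d)) {t : ι → F} (ht0 : ∀ i, t i ≠ 0)
    (ht : ∀ i, t i ∈ homogFrac ℬ F (d i)) :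
    Subfield.closure ((homogFracZero ℬ F : Set F) ∪ Set.range t) = ⊤ := by
  set L := Subfield.closure ((homogFracZero ℬ F : Set F) ∪ Set.range t)
  have hL {c : Q} (hc : c ∈ Gsub ℬ) : ∃ z ∈ L, z ≠ 0 ∧ z ∈ homogFrac ℬ F c := by
    refine exists_ne_zero_mem_homogFrac_of_mem_closure (Set.forall_mem_range.2 fun i => ?_) (hd hc)
    exact ⟨t i, Subfield.subset_closure (.inr ⟨i, rfl⟩), ht0 i, ht i⟩
  have hB (x : B) : algebraMap B F x ∈ L := by
    induction x using Decomposition.inductionOn ℬ with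
    | zero => simp
    | @homogeneous i x =>
      by_cases hi : ℬ i = ⊥
      · have hx : (x : B) = 0 := by simpa [hi] using x.2
        simp [hx]
      obtain ⟨z, hzL, hz0, hz⟩ := hL (AddSubgroup.subset_closure hi)
      have hxz : algebraMap B F x * z⁻¹ ∈ homogFrac ℬ F 0 := add_neg_cancel i ▸
        SetLike.mul_mem_graded (algebraMap_mem_homogFrac ℬ F x.2) (inv_mem_homogFrac hz)
      rw [← inv_mul_cancel_right₀ hz0 (algebraMap B F x)]
      exact mul_mem (Subfield.subset_closure (.inl hxz)) hzL
    | add x y hx hy => simpa using add_mem hx hy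
  refine eq_top_iff.2 fun z _ => ?_
  obtain ⟨x, y, -, rfl⟩ := IsFractionRing.div_surjective (A := B) z
  exact div_mem (hB x) (hB y)

variable (F) in
theorem exists_algebraicIndependent_closure_eq_top [IsFractionRing B F] {ι : Type*}
    (b : Module.Basis ι ℤ (Gsub ℬ)) :
    ∃ t : ι → F, AlgebraicIndependent (homogFracZero ℬ F) t ∧
      Subfield.closure ((homogFracZero ℬ F : Set F) ∪ Set.range t) = ⊤ := by
  choose t ht0 ht using fun i => exists_ne_zero_mem_homogFrac (F := F) (b i).2
  refine ⟨t, algebraicIndependent_homogFracZero (d := fun i => (b i : Q)) ?_ ht0 ht,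
    closure_homogFracZero_union_range_eq_top (d := fun i => (b i : Q)) ?_ ht0 ht⟩
  · have hb : LinearIndependent ℤ fun i => (b i : Q) :=
      b.linearIndependent.map' (Gsub ℬ).subtype.toIntLinearMap
        (LinearMap.ker_eq_bot.2 (Gsub ℬ).subtype_injective)
    exact hb.restrict_scalars fun m n h => by simpa using h
  · intro g hg
    have hg' : ∑ i ∈ (b.repr ⟨g, hg⟩).support, b.repr ⟨g, hg⟩ i • (b i : Q) = g := by
      simpa [Finsupp.linearCombination_apply, Finsupp.sum] using
        congrArg Subtype.val (b.linearCombination_repr ⟨g, hg⟩)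
    rw [← hg']
    exact sum_mem fun i _ => zsmul_mem (AddSubgroup.subset_closure (Set.mem_range_self i)) _

end HomogeneousFractions

section Rank

theorem rank_rat_tensorProduct (A : Type*) [AddCommGroup A] :
    Module.rank ℚ (ℚ ⊗[ℤ] A) = Module.rank ℤ A := by
  have hQ := IsFractionRing.rank_right_eq (R := ℤ) (S := ℚ) (N := ℚ ⊗[ℤ] A)
  have hA := IsLocalizedModule.rank_eq (nonZeroDivisors ℤ) le_rfl (TensorProduct.mk ℤ ℚ A 1)
  exact hQ.trans hA

universe u

theorem rank_eq_of_surjective_of_ker_le_torsion {R : Type*} {M N : Type u} [CommRing R]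
    [AddCommGroup M] [AddCommGroup N] [Module R M] [Module R N] {f : M →ₗ[R] N}
    (hf : Function.Surjective f) (hker : LinearMap.ker f ≤ Submodule.torsion R M) :
    Module.rank R M = Module.rank R N := by
  rw [← rank_quotient_eq_of_le_torsion hker, (f.quotKerEquivOfSurjective hf).rank_eq]

variable {G : Type*} [AddCommGroup G]

theorem rank_quotient_eq_rank_map_mk'_torc (H P : AddSubgroup G) :
    Module.rank ℤ (P ⧸ H.addSubgroupOf P) =
      Module.rank ℤ (P.map (QuotientAddGroup.mk' (torc H P))) := by
  let φ := (QuotientAddGroup.mk' (torc H P)).addSubgroupMap P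
  have hφ_eq_zero (x : P) : φ x = 0 ↔ (x : G) ∈ torc H P :=
    Subtype.ext_iff.trans (QuotientAddGroup.eq_zero_iff (x : G))
  have hφ (x : P) (hx : x ∈ H.addSubgroupOf P) : φ x = 0 :=
    (hφ_eq_zero x).2 ⟨x.2, 1, one_pos, by rwa [one_nsmul]⟩
  refine rank_eq_of_surjective_of_ker_le_torsion
    (f := (QuotientAddGroup.lift (H.addSubgroupOf P) φ hφ).toIntLinearMap) ?_ fun x hx => ?_
  · exact QuotientAddGroup.lift_surjective_of_surjective _ _
      (AddMonoidHom.addSubgroupMap_surjective _ _) hφ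
  · obtain ⟨x, rfl⟩ := QuotientAddGroup.mk_surjective x
    obtain ⟨-, n, hn, hnx⟩ := (hφ_eq_zero x).1 hx
    refine (Submodule.mem_torsion_iff _).2
      ⟨⟨n, mem_nonZeroDivisors_of_ne_zero (by omega)⟩, ?_⟩
    change (n : ℤ) • (x : P ⧸ H.addSubgroupOf P) = 0
    rw [natCast_zsmul, ← QuotientAddGroup.mk_nsmul]
    exact (QuotientAddGroup.eq_zero_iff _).2 hnx

theorem nonempty_basis_map_mk'_torc {P H : AddSubgroup G} (hP : P.FG) {r : ℕ}
    (hr : Module.rank ℚ (ℚ ⊗[ℤ] (P ⧸ H.addSubgroupOf P)) = r) :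
    Nonempty (Module.Basis (Fin r) ℤ (P.map (QuotientAddGroup.mk' (torc H P)))) := by
  let q := QuotientAddGroup.mk' (torc H P)
  have : Module.Finite ℤ P :=
    Module.Finite.iff_addGroup_fg.2 ((AddGroup.fg_iff_addSubgroup_fg P).2 hP)
  have : Module.Finite ℤ (P.map q) :=
    Module.Finite.of_surjective (q.addSubgroupMap P).toIntLinearMap (q.addSubgroupMap_surjective P)
  have hrank : Module.rank ℤ (P.map q) = r := by
    rw [← rank_quotient_eq_rank_map_mk'_torc, ← hr, rank_rat_tensorProduct]
  exact ⟨Module.finBasisOfFinrankEq ℤ _ (Module.finrank_eq_of_rank_eq hrank)⟩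

end Rank

theorem trdeg_ML_ge_rank_general {R G B : Type*} [CommRing R] [AddCommGroup G] [DecidableEq G]
    [CommRing B] [IsDomain B] [IsIntegrallyClosed B] [IsNoetherianRing B] [CharZero B]
    [Algebra R B] [Algebra.FiniteType R B] (𝒜 : G → AddSubgroup B) [GradedRing 𝒜]
    (hR : ∀ c : R, algebraMap R B c ∈ 𝒜 0) (r : ℕ)
    (hr : Module.rank ℚ (ℚ ⊗[ℤ]
      ((Gsub 𝒜) ⧸ ((Gbar 𝒜).addSubgroupOf (Gsub 𝒜)))) = r) :
    (∃ Δ : Set (Derivation ℤ B B), (∀ D ∈ Δ, IsLND D) ∧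
      { x : B | ∀ D ∈ Δ, D x = 0 } = (verSub 𝒜 (torc (Gbar 𝒜) (Gsub 𝒜)) : Set B)) ∧
    (∃ K : Subfield (FractionRing B),
      MLset (B := B) ⊆ (verSub 𝒜 (torc (Gbar 𝒜) (Gsub 𝒜)) : Set B) ∧
      (algebraMap B (FractionRing B)) '' (verSub 𝒜 (torc (Gbar 𝒜) (Gsub 𝒜))) ⊆ K ∧
      ∃ t : Fin r → FractionRing B,
        (∀ p : MvPolynomial (Fin r) K, MvPolynomial.eval₂ K.subtype t p = 0 → p = 0) ∧
        Subfield.closure ((K : Set (FractionRing B)) ∪ Set.range t) = ⊤) ∧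
    ((∃ g ∈ Gsub 𝒜, ∀ n : ℕ, 0 < n → ¬ n • g ∈ Gbar 𝒜) →
      ∃ D : Derivation ℤ B B, IsLND D ∧ D ≠ 0) := by
  classical
  let ℬ := coarsen 𝒜 (QuotientAddGroup.mk' (torc (Gbar 𝒜) (Gsub 𝒜)))
  obtain ⟨b⟩ : Nonempty (Module.Basis (Fin r) ℤ (Gsub ℬ)) :=
    Gsub_coarsen 𝒜 (QuotientAddGroup.mk' (torc (Gbar 𝒜) (Gsub 𝒜))) ▸
      nonempty_basis_map_mk'_torc (Gsub_fg 𝒜 hR) hr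
  obtain ⟨t, ht, htop⟩ := exists_algebraicIndependent_closure_eq_top (FractionRing B) b
  refine ⟨exists_isLND_iInter_ker_eq_verSub 𝒜 hR, ⟨homogFracZero ℬ (FractionRing B),
    MLset_subset_verSub 𝒜 hR, Set.image_subset_iff.2 fun x hx => ?_, t,
    algebraicIndependent_iff.1 ht, htop⟩, exists_isLND_ne_zero 𝒜 hR⟩
  exact algebraMap_mem_homogFrac ℬ _ ((mem_verSub_iff_mem_coarsen 𝒜 _).1 hx)

/-- Let k be a field of characteristic 0 and B a normal affine k-domain graded over k
by an abelian group G.  Assume 𝔾(B)/𝔾̄(B) is not torsion, let r be its rank (the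
dimension of ℚ ⊗_ℤ (𝔾(B)/𝔾̄(B))) and W = torc(𝔾̄(B), 𝔾(B)).  Then:
(a) there is a set Δ of locally nilpotent derivations of B with ⋂_{D ∈ Δ} ker D = B^{(W)};
(b) there is a subfield K of Frac(B) with ML(B) ⊆ B^{(W)}, B^{(W)} ⊆ K, such that
    Frac(B) is purely transcendental over K of transcendence degree r (i.e. Frac(B) is
    generated over K by r algebraically independent elements); in particular there are
    r elements of Frac(B) algebraically independent over the subfield generated by the
    image of ML(B);
(c) B is non-rigid. -/
theorem trdeg_ML_ge_rank
    {k : Type*} [Field k] [CharZero k]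
    {G : Type*} [AddCommGroup G] [DecidableEq G]
    {B : Type*} [CommRing B] [IsDomain B] [IsIntegrallyClosed B]
    [Algebra k B] [Algebra.FiniteType k B]
    (𝒜 : G → AddSubgroup B) [GradedRing 𝒜]
    (hoverk : ∀ c : k, algebraMap k B c ∈ 𝒜 0)
    (hnotors : ∃ g ∈ Gsub 𝒜, ∀ n : ℕ, 0 < n → ¬ n • g ∈ Gbar 𝒜)
    (r : ℕ)
    (hr : Module.rank ℚ (ℚ ⊗[ℤ]
      ((Gsub 𝒜) ⧸ ((Gbar 𝒜).addSubgroupOf (Gsub 𝒜)))) = r) :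
    (∃ Δ : Set (Derivation ℤ B B), (∀ D ∈ Δ, IsLND D) ∧
      { x : B | ∀ D ∈ Δ, D x = 0 } = (verSub 𝒜 (torc (Gbar 𝒜) (Gsub 𝒜)) : Set B)) ∧
    (∃ K : Subfield (FractionRing B),
      MLset (B := B) ⊆ (verSub 𝒜 (torc (Gbar 𝒜) (Gsub 𝒜)) : Set B) ∧
      (algebraMap B (FractionRing B)) '' (verSub 𝒜 (torc (Gbar 𝒜) (Gsub 𝒜))) ⊆ K ∧
      ∃ t : Fin r → FractionRing B,
        (∀ p : MvPolynomial (Fin r) K, MvPolynomial.eval₂ K.subtype t p = 0 → p = 0) ∧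
        Subfield.closure ((K : Set (FractionRing B)) ∪ Set.range t) = ⊤) ∧
    (∃ D : Derivation ℤ B B, IsLND D ∧ D ≠ 0) := by
  have : IsNoetherianRing B := Algebra.FiniteType.isNoetherianRing k B
  have : CharZero B := charZero_of_injective_algebraMap (algebraMap k B).injective
  obtain ⟨hker, hfrac, hrigid⟩ := trdeg_ML_ge_rank_general 𝒜 hoverk r hr
  exact ⟨hker, hfrac, hrigid hnotors⟩
end
end

section
/- Let B be a ring graded by a torsion-free abelian group G. Then: (a) if p is a prime ideal of B and I is the ideal of B generated by all homogeneous elements of p, then I is a prime ideal; (b) if B is an integral domain and p is a height-1 prime ideal of B that contains a nonzero homogeneous element of B, then p is a homogeneous ideal. -/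
noncomputable section

/-!
A torsion-free abelian group embeds in a rational vector space, which becomes an ordered group when
its coordinates in a basis are compared lexicographically. With ordered degrees, comparing leading
components shows that the homogeneous core `I` of a prime `p` is prime. If `p` has height one and
`I ≠ p`, then `I` is a minimal prime, which is impossible as soon as a homogeneous element of `p`
avoids the minimal primes.
-/

section Orderable

/-- A commutative monoid is orderable if it carries some linear order for which addition is strictly
monotone. The order is existentially quantified so that a grading by the monoid, which mentions no
order, can be supplied with one inside a proof. -/
def IsOrderable (M : Type*) [AddCommMonoid M] : Prop :=
  ∃ _ : LinearOrder M, IsOrderedCancelAddMonoid M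

theorem IsOrderable.of_injective {M N : Type*} [AddCommMonoid M] [AddCommMonoid N]
    (hN : IsOrderable N) (f : M →+ N) (hf : Function.Injective f) : IsOrderable M := by
  obtain ⟨_, _⟩ := hN
  let : LinearOrder M := LinearOrder.lift' f hf
  exact ⟨inferInstance, Function.Injective.isOrderedCancelAddMonoid f (map_add f) Iff.rfl⟩

theorem isOrderable_finsupp (ι M : Type*) [AddCommMonoid M] [LinearOrder M]
    [IsOrderedCancelAddMonoid M] : IsOrderable (ι →₀ M) := by
  classical
  let : LinearOrder ι := linearOrderOfSTO WellOrderingRel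
  have hLex : IsOrderable (Lex (ι →₀ M)) := ⟨inferInstance, inferInstance⟩
  exact hLex.of_injective { toFun := toLex, map_zero' := rfl, map_add' _ _ := rfl } toLex.injective

theorem isOrderable_of_module_free (R M : Type*) [Semiring R] [LinearOrder R]
    [IsOrderedCancelAddMonoid R] [AddCommMonoid M] [Module R M] [Module.Free R M] :
    IsOrderable M :=
  let b := Module.Free.chooseBasis R M
  (isOrderable_finsupp _ R).of_injective b.repr.toLinearMap.toAddMonoidHom b.repr.injective

theorem isOrderable_of_isAddTorsionFree (M : Type*) [AddCancelCommMonoid M] [IsAddTorsionFree M] :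
    IsOrderable M :=
  have hHull : IsOrderable (DivisibleHull (Algebra.GrothendieckAddGroup M)) :=
    isOrderable_of_module_free ℚ _
  hHull.of_injective
    ((DivisibleHull.coeAddMonoidHom _).comp Algebra.GrothendieckAddGroup.of)
    (DivisibleHull.coe_injective.comp Algebra.GrothendieckAddGroup.of_injective)

theorem isAddTorsionFree_of_nsmul_eq_zero {G : Type*} [AddCommGroup G]
    (htf : ∀ (g : G) (n : ℕ), 0 < n → n • g = 0 → g = 0) : IsAddTorsionFree G where
  nsmul_right_injective n hn a b hab := sub_eq_zero.mp <|
    htf (a - b) n (Nat.pos_of_ne_zero hn) (by rw [nsmul_sub, sub_eq_zero]; exact hab)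

end Orderable

theorem heightOne.mem_minimalPrimes_of_lt {R : Type*} [CommRing R] {p q : Ideal R}
    (hp : heightOne p) (hq : q.IsPrime) (hqp : q < p) : q ∈ minimalPrimes R := by
  rw [minimalPrimes_eq_minimals]
  refine minimal_iff_forall_lt.mpr ⟨hq, fun r hrq hr => ?_⟩
  exact hp.2.2 r q hr hq hrq hqp

section HomogeneousCore

variable {ι σ A : Type*} [DecidableEq ι] [SetLike σ A]

theorem toIdeal_homogeneousCore_eq_span [AddMonoid ι] [Semiring A] [AddSubmonoidClass σ A]
    (𝒜 : ι → σ) [GradedRing 𝒜] (I : Ideal A) :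
    (I.homogeneousCore 𝒜).toIdeal = Ideal.span {x : A | x ∈ I ∧ ∃ i, x ∈ 𝒜 i} :=
  congrArg Ideal.span <|
    (Subtype.image_preimage_coe {x | SetLike.IsHomogeneousElem 𝒜 x} (I : Set A)).trans
      (Set.inter_comm _ _)

variable [AddCommMonoid ι] [CommRing A] [AddSubmonoidClass σ A] (𝒜 : ι → σ) [GradedRing 𝒜]

theorem IsOrderable.isPrime_homogeneousCore (hι : IsOrderable ι) {p : Ideal A} (hp : p.IsPrime) :
    (p.homogeneousCore 𝒜).toIdeal.IsPrime := by
  obtain ⟨L, _⟩ := hι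
  -- The decidable equality in `GradedRing 𝒜` has to be the one coming from the chosen order.
  obtain rfl : ‹DecidableEq ι› = L.toDecidableEq := Subsingleton.elim _ _
  exact hp.homogeneousCore

theorem IsOrderable.isHomogeneous_of_heightOne (hι : IsOrderable ι) {p : Ideal A}
    (hp : heightOne p) {x : A} (hxp : x ∈ p) (hx : SetLike.IsHomogeneousElem 𝒜 x)
    (hxmin : ∀ q ∈ minimalPrimes A, x ∉ q) : p.IsHomogeneous 𝒜 := by
  rw [Ideal.IsHomogeneous.iff_eq]
  by_contra hne
  have hlt : (p.homogeneousCore 𝒜).toIdeal < p := (p.toIdeal_homogeneousCore_le 𝒜).lt_of_ne hne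
  have hmin : (p.homogeneousCore 𝒜).toIdeal ∈ minimalPrimes A :=
    hp.mem_minimalPrimes_of_lt (hι.isPrime_homogeneousCore 𝒜 hp.1) hlt
  exact hxmin _ hmin (Ideal.mem_homogeneousCore_of_homogeneous_of_mem hx hxp)

end HomogeneousCore

theorem homogeneous_part_of_prime_general
    {G : Type*} [AddCancelCommMonoid G] [IsAddTorsionFree G] [DecidableEq G]
    {σ B : Type*} [CommRing B] [SetLike σ B] [AddSubmonoidClass σ B]
    (𝒜 : G → σ) [GradedRing 𝒜] :
    (∀ p : Ideal B, p.IsPrime →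
      (Ideal.span { x : B | x ∈ p ∧ ∃ i, x ∈ 𝒜 i }).IsPrime) ∧
    (∀ p : Ideal B, heightOne p →
      (∃ x ∈ p, (∀ q ∈ minimalPrimes B, x ∉ q) ∧ ∃ i, x ∈ 𝒜 i) →
      p = Ideal.span { x : B | x ∈ p ∧ ∃ i, x ∈ 𝒜 i }) := by
  have hG : IsOrderable G := isOrderable_of_isAddTorsionFree G
  simp only [← toIdeal_homogeneousCore_eq_span 𝒜]
  refine ⟨fun p hp => hG.isPrime_homogeneousCore 𝒜 hp, ?_⟩
  rintro p hp ⟨x, hxp, hxmin, hx⟩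
  have hhom : p.IsHomogeneous 𝒜 := hG.isHomogeneous_of_heightOne 𝒜 hp hxp hx hxmin
  exact hhom.toIdeal_homogeneousCore_eq_self.symm

/-- Let B be a ring graded by a torsion-free abelian group G.  Then:
(a) if p is a prime ideal of B and I is the ideal generated by all homogeneous
    elements of p, then I is prime;
(b) if B is a domain and p is a height-1 prime ideal containing a nonzero homogeneous
    element of B, then p is a homogeneous ideal (generated by its homogeneous
    elements). -/
theorem homogeneous_part_of_prime
    {G : Type*} [AddCommGroup G] [DecidableEq G]
    {B : Type*} [CommRing B]
    (𝒜 : G → AddSubgroup B) [GradedRing 𝒜]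
    (htf : ∀ (g : G) (n : ℕ), 0 < n → n • g = 0 → g = 0) :
    (∀ p : Ideal B, p.IsPrime →
      (Ideal.span { x : B | x ∈ p ∧ ∃ i, x ∈ 𝒜 i }).IsPrime) ∧
    (IsDomain B → ∀ p : Ideal B, heightOne p → (∃ x ∈ p, x ≠ 0 ∧ ∃ i, x ∈ 𝒜 i) →
      p = Ideal.span { x : B | x ∈ p ∧ ∃ i, x ∈ 𝒜 i }) := by
  have := isAddTorsionFree_of_nsmul_eq_zero htf
  refine (homogeneous_part_of_prime_general 𝒜).imp_right fun h _ p hp ⟨x, hxp, hx0, hx⟩ => ?_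
  exact h p hp ⟨x, hxp, by simpa [IsDomain.minimalPrimes_eq_singleton_bot] using hx0, hx⟩
end
end
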